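/- Let (g,B_g) be an irreducible finite-dimensional NIS-Lie superalgebra over a field K of characteristic 2 with B_g even, and define the cone C(g,B_g) := {u ∈ g_1 : B_g(s_g(u), s_g(v)) = 0 for all v ∈ g_1}. If z(g)_1 ∩ C(g,B_g) ≠ {0}, then (g,B_g) is obtained either as a D_ev-extension or as a D_od-extension of a NIS-Lie superalgebra (a,B_a) of dimension dim(g) − 2. -/

import Mathlib

/-!
Common definitions: Lie superalgebras in characteristic 2 (encoded by their even
part `g0`, odd part `g1`, bracket components and squaring), NIS forms (even and odd),
homogeneous derivations, isometries, ideals, irreducibility, and the structure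
formulas of the various double extensions.
-/

namespace Char2DoubleExt

section Defs

variable (K : Type) [Field K]
variable (g0 g1 h0 h1 : Type)
variable [AddCommGroup g0] [Module K g0] [AddCommGroup g1] [Module K g1]
variable [AddCommGroup h0] [Module K h0] [AddCommGroup h1] [Module K h1]

/-- A Lie superalgebra over a field of characteristic 2: `g0` is the even part,
`g1` the odd part, `br0` the bracket on `g0`, `br1` the action of `g0` on `g1`
(the mixed bracket, extended symmetrically), `br11` the bracket of two odd
elements, and `sq` the squaring, whose polarization is `br11`. -/
structure SuperAlg : Type where
  br0 : g0 →ₗ[K] g0 →ₗ[K] g0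
  br1 : g0 →ₗ[K] g1 →ₗ[K] g1
  br11 : g1 →ₗ[K] g1 →ₗ[K] g0
  sq : g1 → g0
  sq_smul : ∀ (c : K) (f : g1), sq (c • f) = (c * c) • sq f
  sq_add : ∀ f g : g1, sq (f + g) = sq f + sq g + br11 f g
  br0_self : ∀ x : g0, br0 x x = 0
  br11_comm : ∀ f g : g1, br11 f g = br11 g f
  jacobi0 : ∀ x y z : g0, br0 x (br0 y z) + br0 y (br0 z x) + br0 z (br0 x y) = 0
  act_br : ∀ (x y : g0) (f : g1), br1 (br0 x y) f = br1 x (br1 y f) + br1 y (br1 x f)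
  jacobi_mix : ∀ (x : g0) (f g : g1),
    br0 x (br11 f g) + br11 f (br1 x g) + br11 g (br1 x f) = 0
  sq_br0 : ∀ (f : g1) (x : g0), br0 (sq f) x = br11 f (br1 x f)
  sq_br1 : ∀ f g : g1, br1 (sq f) g = br1 (br11 f g) f

/-- A non-degenerate invariant supersymmetric *even* bilinear form on a Lie
superalgebra in characteristic 2: it pairs `g0` with `g0` (component `B0`) and
`g1` with `g1` (component `B1`); mixed pairings vanish by evenness. -/
structure EvenNIS (S : SuperAlg K g0 g1) : Type where
  B0 : g0 →ₗ[K] g0 →ₗ[K] K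
  B1 : g1 →ₗ[K] g1 →ₗ[K] K
  symm0 : ∀ x y, B0 x y = B0 y x
  symm1 : ∀ f g, B1 f g = B1 g f
  alt1 : ∀ f, B1 f f = 0
  nondeg0 : ∀ x, (∀ y, B0 x y = 0) → x = 0
  nondeg1 : ∀ f, (∀ g, B1 f g = 0) → f = 0
  inv0 : ∀ x y z, B0 (S.br0 x y) z = B0 x (S.br0 y z)
  inv1 : ∀ (x : g0) (f g : g1), B1 (S.br1 x f) g = B0 x (S.br11 f g)
  inv2 : ∀ (f g : g1) (x : g0), B0 (S.br11 f g) x = B1 f (S.br1 x g)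

/-- A non-degenerate invariant supersymmetric *odd* bilinear form: it pairs `g0`
with `g1` (component `Bo`); like-parity pairings vanish by oddness, and
`B(f,f) = 0` for odd `f` is automatic. -/
structure OddNIS (S : SuperAlg K g0 g1) : Type where
  Bo : g0 →ₗ[K] g1 →ₗ[K] K
  nondeg0 : ∀ x, (∀ f, Bo x f = 0) → x = 0
  nondeg1 : ∀ f, (∀ x, Bo x f = 0) → f = 0
  inv0 : ∀ (x y : g0) (f : g1), Bo (S.br0 x y) f = Bo x (S.br1 y f)
  inv1 : ∀ (x y : g0) (f : g1), Bo y (S.br1 x f) = Bo x (S.br1 y f)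
  inv2 : ∀ f g h : g1, Bo (S.br11 f g) h = Bo (S.br11 g h) f

/-- An even derivation of a Lie superalgebra in characteristic 2. -/
structure EvenDer (S : SuperAlg K g0 g1) : Type where
  D0 : g0 →ₗ[K] g0
  D1 : g1 →ₗ[K] g1
  der0 : ∀ x y, D0 (S.br0 x y) = S.br0 (D0 x) y + S.br0 x (D0 y)
  der1 : ∀ x f, D1 (S.br1 x f) = S.br1 (D0 x) f + S.br1 x (D1 f)
  der_sq : ∀ f, D0 (S.sq f) = S.br11 (D1 f) f

/-- An odd derivation of a Lie superalgebra in characteristic 2. -/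
structure OddDer (S : SuperAlg K g0 g1) : Type where
  D0 : g0 →ₗ[K] g1
  D1 : g1 →ₗ[K] g0
  der0 : ∀ x y, D0 (S.br0 x y) = S.br1 x (D0 y) + S.br1 y (D0 x)
  der1 : ∀ x f, D1 (S.br1 x f) = S.br11 (D0 x) f + S.br0 x (D1 f)
  der_sq : ∀ f, D0 (S.sq f) = S.br1 (D1 f) f

/-- An isometry between Lie superalgebras endowed with even NIS forms: an even
linear bijection preserving brackets, squarings and the bilinear forms. -/
structure EvenIsometry (S : SuperAlg K g0 g1) (N : EvenNIS K g0 g1 S)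
    (S' : SuperAlg K h0 h1) (N' : EvenNIS K h0 h1 S') : Type where
  e0 : g0 ≃ₗ[K] h0
  e1 : g1 ≃ₗ[K] h1
  map_br0 : ∀ x y, e0 (S.br0 x y) = S'.br0 (e0 x) (e0 y)
  map_br1 : ∀ x f, e1 (S.br1 x f) = S'.br1 (e0 x) (e1 f)
  map_br11 : ∀ f g, e0 (S.br11 f g) = S'.br11 (e1 f) (e1 g)
  map_sq : ∀ f, e0 (S.sq f) = S'.sq (e1 f)
  map_B0 : ∀ x y, N'.B0 (e0 x) (e0 y) = N.B0 x y
  map_B1 : ∀ f g, N'.B1 (e1 f) (e1 g) = N.B1 f g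

/-- An isometry between Lie superalgebras endowed with odd NIS forms. -/
structure OddIsometry (S : SuperAlg K g0 g1) (N : OddNIS K g0 g1 S)
    (S' : SuperAlg K h0 h1) (N' : OddNIS K h0 h1 S') : Type where
  e0 : g0 ≃ₗ[K] h0
  e1 : g1 ≃ₗ[K] h1
  map_br0 : ∀ x y, e0 (S.br0 x y) = S'.br0 (e0 x) (e0 y)
  map_br1 : ∀ x f, e1 (S.br1 x f) = S'.br1 (e0 x) (e1 f)
  map_br11 : ∀ f g, e0 (S.br11 f g) = S'.br11 (e1 f) (e1 g)
  map_sq : ∀ f, e0 (S.sq f) = S'.sq (e1 f)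
  map_Bo : ∀ x f, N'.Bo (e0 x) (e1 f) = N.Bo x f

/-- A (graded) ideal of a Lie superalgebra in characteristic 2, given by its
even part `I0` and odd part `I1`. -/
def IsIdealPair (S : SuperAlg K g0 g1) (I0 : Submodule K g0) (I1 : Submodule K g1) : Prop :=
  (∀ x ∈ I0, ∀ y, S.br0 x y ∈ I0) ∧ (∀ x ∈ I0, ∀ f, S.br1 x f ∈ I1) ∧
  (∀ f ∈ I1, ∀ x : g0, S.br1 x f ∈ I1) ∧ (∀ f ∈ I1, ∀ g, S.br11 f g ∈ I0) ∧
  (∀ f ∈ I1, S.sq f ∈ I0)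

/-- Irreducibility of a NIS-Lie superalgebra with an even form: it is not the
direct sum of two nonzero mutually orthogonal ideals. -/
def EvenIrreducible (S : SuperAlg K g0 g1) (N : EvenNIS K g0 g1 S) : Prop :=
  ¬ ∃ (I0 J0 : Submodule K g0) (I1 J1 : Submodule K g1),
      IsIdealPair K g0 g1 S I0 I1 ∧ IsIdealPair K g0 g1 S J0 J1 ∧
      (I0 ≠ ⊥ ∨ I1 ≠ ⊥) ∧ (J0 ≠ ⊥ ∨ J1 ≠ ⊥) ∧
      I0 ⊓ J0 = ⊥ ∧ I0 ⊔ J0 = ⊤ ∧ I1 ⊓ J1 = ⊥ ∧ I1 ⊔ J1 = ⊤ ∧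
      (∀ x ∈ I0, ∀ y ∈ J0, N.B0 x y = 0) ∧ (∀ f ∈ I1, ∀ g ∈ J1, N.B1 f g = 0)

/-- Irreducibility of a NIS-Lie superalgebra with an odd form. -/
def OddIrreducible (S : SuperAlg K g0 g1) (N : OddNIS K g0 g1 S) : Prop :=
  ¬ ∃ (I0 J0 : Submodule K g0) (I1 J1 : Submodule K g1),
      IsIdealPair K g0 g1 S I0 I1 ∧ IsIdealPair K g0 g1 S J0 J1 ∧
      (I0 ≠ ⊥ ∨ I1 ≠ ⊥) ∧ (J0 ≠ ⊥ ∨ J1 ≠ ⊥) ∧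
      I0 ⊓ J0 = ⊥ ∧ I0 ⊔ J0 = ⊤ ∧ I1 ⊓ J1 = ⊥ ∧ I1 ⊔ J1 = ⊤ ∧
      (∀ x ∈ I0, ∀ g ∈ J1, N.Bo x g = 0) ∧ (∀ y ∈ J0, ∀ f ∈ I1, N.Bo y f = 0)

/-- An ideal of a Lie superalgebra given as a pair of subsets (closed under the
vector space operations, brackets with arbitrary elements, and the squaring). -/
def IsIdealSet (S : SuperAlg K g0 g1) (I0 : Set g0) (I1 : Set g1) : Prop :=
  ((0 : g0) ∈ I0) ∧ (∀ x y, x ∈ I0 → y ∈ I0 → x + y ∈ I0) ∧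
  (∀ (c : K) x, x ∈ I0 → c • x ∈ I0) ∧
  ((0 : g1) ∈ I1) ∧ (∀ f g, f ∈ I1 → g ∈ I1 → f + g ∈ I1) ∧
  (∀ (c : K) f, f ∈ I1 → c • f ∈ I1) ∧
  (∀ x ∈ I0, ∀ y, S.br0 x y ∈ I0) ∧ (∀ x ∈ I0, ∀ f, S.br1 x f ∈ I1) ∧
  (∀ f ∈ I1, ∀ x : g0, S.br1 x f ∈ I1) ∧ (∀ f ∈ I1, ∀ g, S.br11 f g ∈ I0) ∧
  (∀ f ∈ I1, S.sq f ∈ I0)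

/-- The even part of the center of a Lie superalgebra. -/
def zEven (S : SuperAlg K g0 g1) : Submodule K g0 :=
  (⨅ y : g0, LinearMap.ker (S.br0.flip y)) ⊓ (⨅ f : g1, LinearMap.ker (S.br1.flip f))

/-- The odd part of the center of a Lie superalgebra. -/
def zOdd (S : SuperAlg K g0 g1) : Submodule K g1 :=
  (⨅ x : g0, LinearMap.ker (S.br1 x)) ⊓ (⨅ g : g1, LinearMap.ker (S.br11.flip g))

/-- The compatibility conditions between an even NIS `N`, an even derivation `D`
and a quadratic form `al` on the odd part, entering the `D_ev`-extension (even
form case): `B(Du,v)+B(u,Dv)=0`, `B(Du,u)=0` for even `u`, `al` is quadratic and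
its polar form is `B(·,D·)`. -/
def DevDataEven (S : SuperAlg K g0 g1) (N : EvenNIS K g0 g1 S)
    (D : EvenDer K g0 g1 S) (al : g1 → K) : Prop :=
  (∀ x y : g0, N.B0 (D.D0 x) y + N.B0 x (D.D0 y) = 0) ∧
  (∀ f g : g1, N.B1 (D.D1 f) g + N.B1 f (D.D1 g) = 0) ∧
  (∀ x : g0, N.B0 (D.D0 x) x = 0) ∧
  (∀ (c : K) (f : g1), al (c • f) = c * c * al f) ∧
  (∀ f g : g1, N.B1 f (D.D1 g) = al (f + g) - al f - al g)

/-- The structure constants of the `D_ev`-extension `g = Kx ⊕ a ⊕ Kx*` (even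
form, even `x`, `x*`); an element of the even part is written `(r, u, s)` for
`r x + u + s x*`, and the constant `c` is the (arbitrary) value `B_g(x*,x*)`. -/
def DevExtEvenFormulas (S : SuperAlg K g0 g1) (N : EvenNIS K g0 g1 S)
    (D : EvenDer K g0 g1 S) (al : g1 → K) (c : K)
    (T : SuperAlg K (K × g0 × K) g1) (M : EvenNIS K (K × g0 × K) g1 T) : Prop :=
  (∀ (r s r' s' : K) (u u' : g0),
      T.br0 (r, u, s) (r', u', s')
        = (N.B0 (D.D0 u) u', S.br0 u u' + s • D.D0 u' + s' • D.D0 u, 0)) ∧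
  (∀ (r s : K) (u : g0) (f : g1), T.br1 (r, u, s) f = S.br1 u f + s • D.D1 f) ∧
  (∀ f : g1, T.sq f = (al f, S.sq f, 0)) ∧
  (∀ (r s r' s' : K) (u u' : g0),
      M.B0 (r, u, s) (r', u', s') = N.B0 u u' + r * s' + r' * s + c * (s * s')) ∧
  (∀ f g : g1, M.B1 f g = N.B1 f g)

/-- The compatibility conditions between an even NIS `N`, an odd derivation `D`
and an even element `w = a₀`, entering the `D_od`-extension (even form case):
`B(Du,v) = B(u,Dv)`, `D² = ad_w`, `D(w) = 0`. -/
def DodDataEven (S : SuperAlg K g0 g1) (N : EvenNIS K g0 g1 S)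
    (D : OddDer K g0 g1 S) (w : g0) : Prop :=
  (∀ (x : g0) (f : g1), N.B1 (D.D0 x) f = N.B0 x (D.D1 f)) ∧
  (∀ x : g0, D.D1 (D.D0 x) = S.br0 w x) ∧
  (∀ f : g1, D.D0 (D.D1 f) = S.br1 w f) ∧
  D.D0 w = 0

/-- The structure constants of the `D_od`-extension `g = Kx ⊕ a ⊕ Kx*` (even
form, odd `x`, `x*`); an element of the odd part is written `(r, u, t)` for
`r x + u + t x*`. -/
def DodExtEvenFormulas (S : SuperAlg K g0 g1) (N : EvenNIS K g0 g1 S)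
    (D : OddDer K g0 g1 S) (w : g0)
    (T : SuperAlg K g0 (K × g1 × K)) (M : EvenNIS K g0 (K × g1 × K) T) : Prop :=
  (∀ x y : g0, T.br0 x y = S.br0 x y) ∧
  (∀ (x : g0) (r t : K) (u : g1),
      T.br1 x (r, u, t) = (N.B1 (D.D0 x) u, S.br1 x u + t • D.D0 x, 0)) ∧
  (∀ (r t : K) (u : g1), T.sq (r, u, t) = S.sq u + (t * t) • w + t • D.D1 u) ∧
  (∀ x y : g0, M.B0 x y = N.B0 x y) ∧
  (∀ (r t r' t' : K) (u u' : g1),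
      M.B1 (r, u, t) (r', u', t') = N.B1 u u' + r * t' + r' * t)

/-- The compatibility conditions between an odd NIS `No`, an odd derivation `D`,
an even element `w = a₀` and a quadratic form `al`, entering the
`D_od`-extension (odd form case). -/
def DodDataOdd (S : SuperAlg K g0 g1) (No : OddNIS K g0 g1 S)
    (D : OddDer K g0 g1 S) (w : g0) (al : g1 → K) : Prop :=
  (∀ x y : g0, No.Bo y (D.D0 x) + No.Bo x (D.D0 y) = 0) ∧
  (∀ f g : g1, No.Bo (D.D1 f) g + No.Bo (D.D1 g) f = 0) ∧
  (∀ x : g0, No.Bo x (D.D0 x) = 0) ∧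
  (∀ x : g0, D.D1 (D.D0 x) = S.br0 w x) ∧
  (∀ f : g1, D.D0 (D.D1 f) = S.br1 w f) ∧
  D.D0 w = 0 ∧
  (∀ (c : K) (f : g1), al (c • f) = c * c * al f) ∧
  (∀ f g : g1, al (f + g) - al f - al g = No.Bo (D.D1 f) g)

/-- The structure constants of the `D_od`-extension `g = Kx ⊕ a ⊕ Ke` (odd form,
even `x`, odd `e`); an even element is written `(r, u)` for `r x + u`, an odd
element `(v, μ)` for `v + μ e`. -/
def DodExtOddFormulas (S : SuperAlg K g0 g1) (No : OddNIS K g0 g1 S)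
    (D : OddDer K g0 g1 S) (w : g0) (al : g1 → K) (m : K)
    (T : SuperAlg K (K × g0) (g1 × K)) (M : OddNIS K (K × g0) (g1 × K) T) : Prop :=
  (∀ (r r' : K) (x y : g0), T.br0 (r, x) (r', y) = (No.Bo y (D.D0 x), S.br0 x y)) ∧
  (∀ (r μ : K) (x : g0) (v : g1), T.br1 (r, x) (v, μ) = (S.br1 x v + μ • D.D0 x, 0)) ∧
  (∀ (μ : K) (v : g1),
      T.sq (v, μ) = (μ * μ * m + al v, S.sq v + (μ * μ) • w + μ • D.D1 v)) ∧
  (∀ (r μ : K) (x : g0) (v : g1), M.Bo (r, x) (v, μ) = No.Bo x v + r * μ)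

/-- The compatibility condition between an odd NIS `No` and an even derivation
`D`, entering the `D_ev`-extension (odd form case): `B(Du,v)+B(u,Dv)=0`. -/
def DevDataOdd (S : SuperAlg K g0 g1) (No : OddNIS K g0 g1 S)
    (D : EvenDer K g0 g1 S) : Prop :=
  ∀ (x : g0) (v : g1), No.Bo (D.D0 x) v + No.Bo x (D.D1 v) = 0

/-- The structure constants of the `D_ev`-extension `g = Kx ⊕ a ⊕ Ke` (odd form,
odd `x`, even `e`); an even element is written `(u, ν)` for `u + ν e`, an odd
element `(μ, v)` for `μ x + v`. -/
def DevExtOddFormulas (S : SuperAlg K g0 g1) (No : OddNIS K g0 g1 S)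
    (D : EvenDer K g0 g1 S)
    (T : SuperAlg K (g0 × K) (K × g1)) (M : OddNIS K (g0 × K) (K × g1) T) : Prop :=
  (∀ (ν ν' : K) (x y : g0),
      T.br0 (x, ν) (y, ν') = (S.br0 x y + ν • D.D0 y + ν' • D.D0 x, 0)) ∧
  (∀ (ν μ : K) (x : g0) (v : g1),
      T.br1 (x, ν) (μ, v) = (No.Bo (D.D0 x) v, S.br1 x v + ν • D.D1 v)) ∧
  (∀ (μ : K) (v : g1), T.sq (μ, v) = (S.sq v, 0)) ∧
  (∀ (ν μ : K) (x : g0) (v : g1), M.Bo (x, ν) (μ, v) = No.Bo x v + ν * μ)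

end Defs

end Char2DoubleExt

/-!
The line `Kx` spanned by a central isotropic homogeneous vector `x` is an ideal, and invariance
of the form puts every bracket in `x^⊥`. For `x*` with `B(x, x*) = 1`, the space
`a = {x, x*}^⊥` is a copy of `x^⊥ / Kx`; projecting the brackets of `g` to `a` makes it a NIS-Lie
superalgebra on which `[x*, ·]` is a derivation `D`, and the `x`-component of `[u, v]` is
`B(x*, [u, v]) = B(D u, v)`.

Let `z ≠ 0` be an odd central vector of the cone. If `s(z) = 0`, take `x = z`. Otherwise take
`x = s(z)`, which is even and central. Squares are not sums of brackets in characteristic 2, so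
invariance does not put them in `x^⊥`: this is exactly what membership of `z` in the cone supplies,
along with the isotropy of `x`.
-/

namespace Char2DoubleExt

section CharTwo

variable (R : Type*) {V : Type*} [Ring R] [CharP R 2] [AddCommGroup V] [Module R V]

include R

theorem add_self_eq_zero_of_charTwo (v : V) : v + v = 0 := by
  rw [← two_smul R v, CharTwo.two_eq_zero, zero_smul]

theorem add_eq_zero_iff_eq_of_charTwo {v w : V} : v + w = 0 ↔ v = w := by
  rw [← neg_eq_of_add_eq_zero_left (add_self_eq_zero_of_charTwo R w), eq_neg_iff_add_eq_zero,
    neg_eq_of_add_eq_zero_left (add_self_eq_zero_of_charTwo R w)]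

end CharTwo

section DualPair

variable {R V : Type*} [CommRing R] [AddCommGroup V] [Module R V]

/-- An isotropic vector `x` and a vector `xs` dual to it, for a symmetric bilinear form `B`. The
vector `xs` need not be isotropic: in characteristic 2 no multiple of `x` can be added to `xs` to
change `B xs xs`. -/
structure IsDualPair (B : V →ₗ[R] V →ₗ[R] R) (x xs : V) : Prop where
  symm : ∀ u v, B u v = B v u
  self : B x x = 0
  pair : B x xs = 1

/-- The subspace `{x, xs}^⊥`, which carries the smaller superalgebra `a` of an extension. -/
def pairOrthogonal (B : V →ₗ[R] V →ₗ[R] R) (x xs : V) : Submodule R V :=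
  LinearMap.ker (B x) ⊓ LinearMap.ker (B xs)

variable {B : V →ₗ[R] V →ₗ[R] R} {x xs : V}

theorem mem_pairOrthogonal {v : V} :
    v ∈ pairOrthogonal B x xs ↔ B x v = 0 ∧ B xs v = 0 :=
  Iff.rfl

namespace IsDualPair

theorem pair_swap (h : IsDualPair B x xs) : B xs x = 1 := by rw [h.symm, h.pair]

theorem notMem_span [Nontrivial R] (h : IsDualPair B x xs) :
    xs ∉ Submodule.span R ({x} : Set V) := by
  intro hxs
  obtain ⟨c, rfl⟩ := Submodule.mem_span_singleton.1 hxs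
  simpa [h.self] using h.pair

/-- The projection of `V` onto `{x, xs}^⊥` along the span of `x` and `xs`. -/
def proj (h : IsDualPair B x xs) : V →ₗ[R] pairOrthogonal B x xs :=
  LinearMap.codRestrict _
    (LinearMap.id - (B x).smulRight xs - (B xs - B xs xs • B x).smulRight x)
    fun v => mem_pairOrthogonal.2
      ⟨by simp [h.self, h.pair], by simp [h.pair_swap, mul_comm]⟩

variable (h : IsDualPair B x xs)

theorem coe_proj (v : V) :
    (h.proj v : V) = v - B x v • xs - (B xs v - B xs xs * B x v) • x :=
  rfl

theorem coe_proj_of_apply_eq_zero {v : V} (hv : B x v = 0) :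
    (h.proj v : V) = v - B xs v • x := by
  simp [coe_proj, hv]

theorem coe_proj_of_mem {v : V} (hv : v ∈ pairOrthogonal B x xs) : (h.proj v : V) = v := by
  simp [coe_proj_of_apply_eq_zero h hv.1, (mem_pairOrthogonal.1 hv).2]

theorem eq_smul_add_proj {v : V} (hv : B x v = 0) : v = B xs v • x + h.proj v := by
  rw [h.coe_proj_of_apply_eq_zero hv, add_sub_cancel]

theorem map_coe_proj {W : Type*} [AddCommGroup W] [Module R W] (L : V →ₗ[R] W) (hL : L x = 0)
    {v : V} (hv : B x v = 0) : L (h.proj v) = L v := by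
  simp [h.coe_proj_of_apply_eq_zero hv, hL]

theorem apply_coe_proj_right (u : pairOrthogonal B x xs) (v : V) : B u (h.proj v) = B u v := by
  obtain ⟨hxu, hxsu⟩ := mem_pairOrthogonal.1 u.2
  simp [coe_proj, h.symm u, hxu, hxsu]

theorem apply_coe_proj_left (u : pairOrthogonal B x xs) (v : V) : B (h.proj v) u = B v u := by
  rw [h.symm, h.apply_coe_proj_right, h.symm]

include h in
theorem nondegenerate_pairOrthogonal (hB : ∀ u, (∀ v, B u v = 0) → u = 0)
    (u : pairOrthogonal B x xs) (hu : ∀ v : pairOrthogonal B x xs, B u v = 0) : u = 0 :=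
  Subtype.ext <| hB u fun v => by rw [← h.apply_coe_proj_right, hu]

theorem ker_proj : LinearMap.ker h.proj = Submodule.span R {x, xs} := by
  apply le_antisymm
  · intro v hv
    have hv' : (h.proj v : V) = 0 := congrArg Subtype.val (LinearMap.mem_ker.1 hv)
    rw [coe_proj, sub_sub, sub_eq_zero, add_comm] at hv'
    exact Submodule.mem_span_pair.2 ⟨_, _, hv'.symm⟩
  · rw [Submodule.span_le, Set.pair_subset_iff]
    constructor <;> refine LinearMap.mem_ker.2 (Subtype.ext ?_)
    · simp [coe_proj, h.self, h.pair_swap]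
    · simp [coe_proj, h.pair]

include h in
theorem isCompl_span_pairOrthogonal :
    IsCompl (Submodule.span R {x, xs}) (pairOrthogonal B x xs) :=
  h.ker_proj ▸ (LinearMap.isCompl_of_proj fun u => Subtype.ext (h.coe_proj_of_mem u.2)).symm

include h in
theorem prod_surjective : Function.Surjective ((B x).prod (B xs)) := fun ⟨a, b⟩ =>
  ⟨a • xs + (b - a * B xs xs) • x, by simp [h.self, h.pair, h.pair_swap]⟩

end IsDualPair

end DualPair

section Rank

universe u v

variable {K : Type u} {V : Type v} [Field K] [AddCommGroup V] [Module K V]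

theorem IsDualPair.rank_pairOrthogonal_add_two {B : V →ₗ[K] V →ₗ[K] K} {x xs : V}
    (h : IsDualPair B x xs) : Module.rank K (pairOrthogonal B x xs) + 2 = Module.rank K V := by
  have hrank := LinearMap.lift_rank_eq_of_surjective h.prod_surjective
  rw [rank_prod', Module.rank_self, one_add_one_eq_two, add_comm] at hrank
  rw [pairOrthogonal, ← LinearMap.ker_prod]
  exact Cardinal.lift_injective.{u, v} (by simpa using hrank.symm)

theorem rank_add_two_eq_rank_iff_finrank [FiniteDimensional K V] (A : Submodule K V) :
    Module.rank K A + 2 = Module.rank K V ↔ Module.finrank K A + 2 = Module.finrank K V := by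
  rw [← Module.finrank_eq_rank, ← Module.finrank_eq_rank]
  norm_cast

theorem exists_apply_eq_one {W : Type*} [AddCommGroup W] [Module K W] {B : V →ₗ[K] W →ₗ[K] K}
    (hB : ∀ u, (∀ v, B u v = 0) → u = 0) {x : V} (hx : x ≠ 0) : ∃ y, B x y = 1 :=
  LinearMap.surjective (fun hBx => hx (hB x fun v => by rw [hBx, LinearMap.zero_apply])) 1

end Rank

variable {K : Type} [Field K] {g0 g1 : Type}
variable [AddCommGroup g0] [Module K g0] [AddCommGroup g1] [Module K g1]

section Center

variable {S : SuperAlg K g0 g1}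

theorem mem_zEven {x : g0} :
    x ∈ zEven K g0 g1 S ↔ (∀ y, S.br0 x y = 0) ∧ ∀ f, S.br1 x f = 0 := by
  simp [zEven]

theorem mem_zOdd {x : g1} :
    x ∈ zOdd K g0 g1 S ↔ (∀ y, S.br1 y x = 0) ∧ ∀ f, S.br11 x f = 0 := by
  simp [zOdd]

theorem sq_mem_zEven {x : g1} (hx : x ∈ zOdd K g0 g1 S) : S.sq x ∈ zEven K g0 g1 S := by
  obtain ⟨-, hx1⟩ := mem_zOdd.1 hx
  exact mem_zEven.2 ⟨fun y => by rw [S.sq_br0, hx1], fun f => by simp [S.sq_br1, hx1]⟩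

variable (N : EvenNIS K g0 g1 S)

/-- The cone `C(g, B_g)`: the odd vectors whose square is orthogonal to all squares. -/
def EvenNIS.cone : Set g1 :=
  {u | ∀ v, N.B0 (S.sq u) (S.sq v) = 0}

theorem EvenNIS.B0_br0_eq_zero {x : g0} (hx : x ∈ zEven K g0 g1 S) (y z : g0) :
    N.B0 x (S.br0 y z) = 0 := by
  rw [← N.inv0, (mem_zEven.1 hx).1, map_zero, LinearMap.zero_apply]

theorem EvenNIS.B0_br11_eq_zero {x : g0} (hx : x ∈ zEven K g0 g1 S) (f g : g1) :
    N.B0 x (S.br11 f g) = 0 := by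
  rw [← N.inv1, (mem_zEven.1 hx).2, map_zero, LinearMap.zero_apply]

theorem EvenNIS.B1_br1_eq_zero {x : g1} (hx : x ∈ zOdd K g0 g1 S) (y : g0) (f : g1) :
    N.B1 x (S.br1 y f) = 0 := by
  rw [← N.inv2, (mem_zOdd.1 hx).2, map_zero, LinearMap.zero_apply]

end Center

namespace SuperAlg

variable [CharP K 2] (S : SuperAlg K g0 g1)

theorem br0_comm (x y : g0) : S.br0 x y = S.br0 y x := by
  rw [← add_eq_zero_iff_eq_of_charTwo K, ← LinearMap.IsAlt.neg S.br0_self y x, neg_add_cancel]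

theorem br11_self (f : g1) : S.br11 f f = 0 := by
  have sq_zero : S.sq 0 = 0 := by simpa using S.sq_smul 0 0
  simpa [add_self_eq_zero_of_charTwo K, sq_zero] using (S.sq_add f f).symm

theorem br0_br0 (x y z : g0) :
    S.br0 x (S.br0 y z) = S.br0 (S.br0 x y) z + S.br0 y (S.br0 x z) := by
  rw [← add_eq_zero_iff_eq_of_charTwo K, ← S.jacobi0 x y z, S.br0_comm (S.br0 x y) z,
    S.br0_comm x z]
  abel

theorem br11_br1 (x : g0) (f g : g1) :
    S.br11 f (S.br1 x g) = S.br11 (S.br1 x f) g + S.br0 x (S.br11 f g) := by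
  rw [← add_eq_zero_iff_eq_of_charTwo K, ← S.jacobi_mix x f g, S.br11_comm g]
  abel

end SuperAlg

/-! ### Reduction by an even central vector -/

section Even

variable {S : SuperAlg K g0 g1} {N : EvenNIS K g0 g1 S} {x : g0}

theorem br0_mem_pairOrthogonal (hx : x ∈ zEven K g0 g1 S) (xs y : g0) :
    S.br0 xs y ∈ pairOrthogonal N.B0 x xs :=
  mem_pairOrthogonal.2 ⟨N.B0_br0_eq_zero hx xs y, by simp [← N.inv0, S.br0_self]⟩

variable {xs : g0} (h : IsDualPair N.B0 x xs) (hx : x ∈ zEven K g0 g1 S)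

include hx in
theorem br0_coe_proj_left {v : g0} (hv : N.B0 x v = 0) : S.br0 (h.proj v) = S.br0 v :=
  h.map_coe_proj S.br0 (LinearMap.ext (mem_zEven.1 hx).1) hv

include hx in
theorem br1_coe_proj_left {v : g0} (hv : N.B0 x v = 0) : S.br1 (h.proj v) = S.br1 v :=
  h.map_coe_proj S.br1 (LinearMap.ext (mem_zEven.1 hx).2) hv

variable [CharP K 2]

include hx in
theorem br0_coe_proj_right (u : g0) {v : g0} (hv : N.B0 x v = 0) :
    S.br0 u (h.proj v) = S.br0 u v := by
  rw [S.br0_comm, br0_coe_proj_left h hx hv, S.br0_comm]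

variable (hsq : ∀ f : g1, N.B0 x (S.sq f) = 0)

/-- The Lie superalgebra `x^⊥ / Kx` for `x` even, central and orthogonal to all squares, realised
on `{x, xs}^⊥` by projecting the brackets and the squaring. -/
def evenReduction : SuperAlg K (pairOrthogonal N.B0 x xs) g1 where
  br0 := (S.br0.domRestrict₁₂ _ _).compr₂ h.proj
  br1 := S.br1.domRestrict _
  br11 := S.br11.compr₂ h.proj
  sq f := h.proj (S.sq f)
  sq_smul c f := by rw [S.sq_smul, map_smul]
  sq_add f g := by simp only [LinearMap.compr₂_apply, S.sq_add, map_add]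
  br0_self u := by
    simp only [LinearMap.compr₂_apply, LinearMap.domRestrict₁₂_apply, S.br0_self, map_zero]
  br11_comm f g := by simp only [LinearMap.compr₂_apply, S.br11_comm f g]
  jacobi0 u v w := by
    simp only [LinearMap.compr₂_apply, LinearMap.domRestrict₁₂_apply,
      br0_coe_proj_right h hx _ (N.B0_br0_eq_zero hx _ _), ← map_add, S.jacobi0, map_zero]
  act_br u v f := by
    simp only [LinearMap.compr₂_apply, LinearMap.domRestrict₁₂_apply, LinearMap.domRestrict_apply,
      br1_coe_proj_left h hx (N.B0_br0_eq_zero hx _ _), S.act_br]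
  jacobi_mix u f g := by
    simp only [LinearMap.compr₂_apply, LinearMap.domRestrict₁₂_apply, LinearMap.domRestrict_apply,
      br0_coe_proj_right h hx _ (N.B0_br11_eq_zero hx _ _), ← map_add, S.jacobi_mix, map_zero]
  sq_br0 f u := by
    simp only [LinearMap.compr₂_apply, LinearMap.domRestrict₁₂_apply, LinearMap.domRestrict_apply,
      br0_coe_proj_left h hx (hsq f), S.sq_br0]
  sq_br1 f g := by
    simp only [LinearMap.compr₂_apply, LinearMap.domRestrict_apply,
      br1_coe_proj_left h hx (hsq f), br1_coe_proj_left h hx (N.B0_br11_eq_zero hx _ _), S.sq_br1]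

/-- The form induced on the reduction by an even central vector. -/
def evenReductionNIS : EvenNIS K _ g1 (evenReduction h hx hsq) where
  B0 := N.B0.domRestrict₁₂ _ _
  B1 := N.B1
  symm0 u v := N.symm0 u v
  symm1 := N.symm1
  alt1 := N.alt1
  nondeg0 := h.nondegenerate_pairOrthogonal N.nondeg0
  nondeg1 := N.nondeg1
  inv0 u v w := by
    simp only [evenReduction, LinearMap.compr₂_apply, LinearMap.domRestrict₁₂_apply,
      h.apply_coe_proj_left, h.apply_coe_proj_right, N.inv0]
  inv1 u f g := by
    simp only [evenReduction, LinearMap.compr₂_apply, LinearMap.domRestrict₁₂_apply,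
      LinearMap.domRestrict_apply, h.apply_coe_proj_right, N.inv1]
  inv2 f g u := by
    simp only [evenReduction, LinearMap.compr₂_apply, LinearMap.domRestrict₁₂_apply,
      LinearMap.domRestrict_apply, h.apply_coe_proj_left, N.inv2]

/-- The even derivation `[xs, ·]` of the reduction by an even central vector. -/
def evenReductionDer : EvenDer K _ g1 (evenReduction h hx hsq) where
  D0 := ((S.br0 xs).domRestrict _).codRestrict _ fun u => br0_mem_pairOrthogonal hx xs u
  D1 := S.br1 xs
  der0 u v := Subtype.ext <| by
    change S.br0 xs (h.proj (S.br0 u v)) =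
      (h.proj (S.br0 (S.br0 xs u) v) + h.proj (S.br0 u (S.br0 xs v)) : pairOrthogonal N.B0 x xs)
    rw [br0_coe_proj_right h hx _ (N.B0_br0_eq_zero hx _ _), ← map_add, ← S.br0_br0,
      h.coe_proj_of_mem (br0_mem_pairOrthogonal hx xs _)]
  der1 u f := by
    change S.br1 xs (S.br1 u f) = S.br1 (S.br0 xs u) f + S.br1 u (S.br1 xs f)
    rw [S.act_br, add_assoc, add_self_eq_zero_of_charTwo K, add_zero]
  der_sq f := Subtype.ext <| by
    change S.br0 xs (h.proj (S.sq f)) = h.proj (S.br11 (S.br1 xs f) f)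
    rw [br0_coe_proj_right h hx _ (hsq f), S.br11_comm, ← S.sq_br0, S.br0_comm (S.sq f),
      h.coe_proj_of_mem (br0_mem_pairOrthogonal hx xs _)]

theorem devDataEven_evenReduction :
    DevDataEven K _ g1 _ (evenReductionNIS h hx hsq) (evenReductionDer h hx hsq)
      fun f => N.B0 xs (S.sq f) := by
  refine ⟨fun u v => ?_, fun f g => ?_, fun u => ?_, fun c f => ?_, fun f g => ?_⟩
  · change N.B0 (S.br0 xs u) v + N.B0 u (S.br0 xs v) = 0
    rw [S.br0_comm, N.inv0, CharTwo.add_self_eq_zero]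
  · change N.B1 (S.br1 xs f) g + N.B1 f (S.br1 xs g) = 0
    rw [N.inv1, ← N.inv2, N.symm0, CharTwo.add_self_eq_zero]
  · change N.B0 (S.br0 xs u) u = 0
    rw [N.inv0, S.br0_self, map_zero]
  · change N.B0 xs (S.sq (c • f)) = c * c * N.B0 xs (S.sq f)
    rw [S.sq_smul, map_smul, smul_eq_mul]
  · change N.B1 f (S.br1 xs g) = N.B0 xs (S.sq (f + g)) - N.B0 xs (S.sq f) - N.B0 xs (S.sq g)
    rw [← N.inv2, N.symm0, S.sq_add, map_add, map_add]
    ring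

theorem coe_br0_eq_smul_add_evenReduction (u v : pairOrthogonal N.B0 x xs) :
    S.br0 u v = (evenReductionNIS h hx hsq).B0 ((evenReductionDer h hx hsq).D0 u) v • x +
      (evenReduction h hx hsq).br0 u v := by
  change S.br0 u v = N.B0 (S.br0 xs u) v • x + h.proj (S.br0 u v)
  rw [N.inv0]
  exact h.eq_smul_add_proj (N.B0_br0_eq_zero hx _ _)

theorem br11_eq_smul_add_evenReduction (f g : g1) :
    S.br11 f g = (evenReductionNIS h hx hsq).B1 f ((evenReductionDer h hx hsq).D1 g) • x +
      (evenReduction h hx hsq).br11 f g := by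
  change S.br11 f g = N.B1 f (S.br1 xs g) • x + h.proj (S.br11 f g)
  rw [← N.inv2, N.symm0]
  exact h.eq_smul_add_proj (N.B0_br11_eq_zero hx _ _)

end Even

/-! ### Reduction by an odd central vector -/

section Odd

variable {S : SuperAlg K g0 g1} {N : EvenNIS K g0 g1 S} {x : g1}

theorem br1_mem_pairOrthogonal [CharP K 2] (hx : x ∈ zOdd K g0 g1 S) (y : g0) (xs : g1) :
    S.br1 y xs ∈ pairOrthogonal N.B1 x xs :=
  mem_pairOrthogonal.2 ⟨N.B1_br1_eq_zero hx y xs, by simp [← N.inv2, S.br11_self]⟩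

variable {xs : g1} (h : IsDualPair N.B1 x xs) (hx : x ∈ zOdd K g0 g1 S)

include hx in
theorem br1_coe_proj_br1 (y z : g0) (f : g1) :
    S.br1 y (h.proj (S.br1 z f)) = S.br1 y (S.br1 z f) :=
  h.map_coe_proj (S.br1 y) ((mem_zOdd.1 hx).1 y) (N.B1_br1_eq_zero hx z f)

include hx in
theorem br11_coe_proj_br1 (f : g1) (y : g0) (g : g1) :
    S.br11 f (h.proj (S.br1 y g)) = S.br11 f (S.br1 y g) :=
  h.map_coe_proj (S.br11 f) (by rw [S.br11_comm, (mem_zOdd.1 hx).2]) (N.B1_br1_eq_zero hx y g)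

variable [CharP K 2]

/-- The Lie superalgebra `x^⊥ / Kx` for `x` odd and central, realised on `{x, xs}^⊥` by projecting
the action of the even part. -/
def oddReduction : SuperAlg K g0 (pairOrthogonal N.B1 x xs) where
  br0 := S.br0
  br1 := (S.br1.domRestrict₂ _).compr₂ h.proj
  br11 := S.br11.domRestrict₁₂ _ _
  sq f := S.sq f
  sq_smul c f := S.sq_smul c f
  sq_add f g := S.sq_add f g
  br0_self := S.br0_self
  br11_comm f g := S.br11_comm f g
  jacobi0 := S.jacobi0
  act_br y z f := by
    simp only [LinearMap.compr₂_apply, LinearMap.domRestrict₂_apply, br1_coe_proj_br1 h hx,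
      ← map_add, S.act_br]
  jacobi_mix y f g := by
    simp only [LinearMap.compr₂_apply, LinearMap.domRestrict₂_apply,
      LinearMap.domRestrict₁₂_apply, br11_coe_proj_br1 h hx, S.jacobi_mix]
  sq_br0 f y := by
    simp only [LinearMap.compr₂_apply, LinearMap.domRestrict₂_apply,
      LinearMap.domRestrict₁₂_apply, br11_coe_proj_br1 h hx, S.sq_br0]
  sq_br1 f g := by
    simp only [LinearMap.compr₂_apply, LinearMap.domRestrict₂_apply,
      LinearMap.domRestrict₁₂_apply, S.sq_br1]

/-- The form induced on the reduction by an odd central vector. -/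
def oddReductionNIS : EvenNIS K g0 _ (oddReduction h hx) where
  B0 := N.B0
  B1 := N.B1.domRestrict₁₂ _ _
  symm0 := N.symm0
  symm1 f g := N.symm1 f g
  alt1 f := N.alt1 f
  nondeg0 := N.nondeg0
  nondeg1 := h.nondegenerate_pairOrthogonal N.nondeg1
  inv0 := N.inv0
  inv1 y f g := by
    simp only [oddReduction, LinearMap.compr₂_apply, LinearMap.domRestrict₂_apply,
      LinearMap.domRestrict₁₂_apply, h.apply_coe_proj_left, N.inv1]
  inv2 f g y := by
    simp only [oddReduction, LinearMap.compr₂_apply, LinearMap.domRestrict₂_apply,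
      LinearMap.domRestrict₁₂_apply, h.apply_coe_proj_right, N.inv2]

/-- The odd derivation `[xs, ·]` of the reduction by an odd central vector. -/
def oddReductionDer : OddDer K g0 _ (oddReduction h hx) where
  D0 := (S.br1.flip xs).codRestrict _ fun y => br1_mem_pairOrthogonal hx y xs
  D1 := (S.br11 xs).domRestrict _
  der0 y z := Subtype.ext <| by
    change S.br1 (S.br0 y z) xs =
      (h.proj (S.br1 y (S.br1 z xs)) + h.proj (S.br1 z (S.br1 y xs)) : pairOrthogonal N.B1 x xs)
    rw [← map_add, ← S.act_br, h.coe_proj_of_mem (br1_mem_pairOrthogonal hx _ xs)]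
  der1 y f := by
    change S.br11 xs (h.proj (S.br1 y f)) = S.br11 (S.br1 y xs) f + S.br0 y (S.br11 xs f)
    rw [br11_coe_proj_br1 h hx, S.br11_br1]
  der_sq f := Subtype.ext <| by
    change S.br1 (S.sq f) xs = h.proj (S.br1 (S.br11 xs f) f)
    rw [S.br11_comm, ← S.sq_br1, h.coe_proj_of_mem (br1_mem_pairOrthogonal hx _ xs)]

theorem dodDataEven_oddReduction :
    DodDataEven K g0 _ _ (oddReductionNIS h hx) (oddReductionDer h hx) (S.sq xs) := by
  refine ⟨fun y f => N.inv1 y xs f, fun y => (S.sq_br0 xs y).symm,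
    fun f => Subtype.ext ?_, Subtype.ext ?_⟩
  · change S.br1 (S.br11 xs f) xs = h.proj (S.br1 (S.sq xs) f)
    rw [S.sq_br1, h.coe_proj_of_mem (br1_mem_pairOrthogonal hx _ xs)]
  · change S.br1 (S.sq xs) xs = 0
    rw [S.sq_br1, S.br11_self, map_zero, LinearMap.zero_apply]

theorem coe_br1_eq_oddReduction_add_smul (y : g0) (f : pairOrthogonal N.B1 x xs) :
    S.br1 y f = (oddReduction h hx).br1 y f +
      (oddReductionNIS h hx).B1 ((oddReductionDer h hx).D0 y) f • x := by
  change S.br1 y f = h.proj (S.br1 y f) + N.B1 (S.br1 y xs) f • x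
  rw [N.inv1, S.br11_comm, ← N.inv1, N.symm1, add_comm]
  exact h.eq_smul_add_proj (N.B1_br1_eq_zero hx y f)

end Odd

/-- `(g, B_g)` is obtained as a `D_ev`-extension: it has the form `Kx ⊕ a ⊕ Kx*` with `x`, `x*`
even, where `a` has even part `A ⊆ g_0` and odd part `g_1`, and the operations of `g` are those of
the extension of `a` by `D` and `al`. Codimension 2 is stated by cardinal ranks, so as to be
meaningful in infinite dimension. -/
def IsDevExtension (S : SuperAlg K g0 g1) (N : EvenNIS K g0 g1 S) : Prop :=
  ∃ (x xs : g0) (A : Submodule K g0) (T : SuperAlg K ↥A g1)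
    (M : EvenNIS K ↥A g1 T) (D : EvenDer K ↥A g1 T) (al : g1 → K),
    DevDataEven K ↥A g1 T M D al ∧
    x ≠ 0 ∧ xs ∉ Submodule.span K ({x} : Set g0) ∧
    Submodule.span K ({x, xs} : Set g0) ⊓ A = ⊥ ∧
    Submodule.span K ({x, xs} : Set g0) ⊔ A = ⊤ ∧
    Module.rank K ↥A + 2 = Module.rank K g0 ∧
    (∀ y : g0, S.br0 x y = 0) ∧ (∀ f : g1, S.br1 x f = 0) ∧
    (∀ u v : A, S.br0 ↑u ↑v = M.B0 (D.D0 u) v • x + ↑(T.br0 u v)) ∧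
    (∀ (u : A) (f : g1), S.br1 ↑u f = T.br1 u f) ∧
    (∀ f : g1, S.br1 xs f = D.D1 f) ∧
    (∀ u : A, S.br0 xs ↑u = ↑(D.D0 u)) ∧
    (∀ f g : g1, S.br11 f g = M.B1 f (D.D1 g) • x + ↑(T.br11 f g)) ∧
    (∀ f : g1, S.sq f = al f • x + ↑(T.sq f)) ∧
    (∀ u v : A, N.B0 ↑u ↑v = M.B0 u v) ∧
    (∀ f g : g1, N.B1 f g = M.B1 f g) ∧
    N.B0 x x = 0 ∧ N.B0 x xs = 1 ∧
    (∀ u : A, N.B0 x ↑u = 0) ∧ (∀ u : A, N.B0 xs ↑u = 0)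

/-- `(g, B_g)` is obtained as a `D_od`-extension: it has the form `Kx ⊕ a ⊕ Kx*` with `x`, `x*`
odd, where `a` has even part `g_0` and odd part `A ⊆ g_1`, and the operations of `g` are those of
the extension of `a` by `D` and `w = a₀`. -/
def IsDodExtension (S : SuperAlg K g0 g1) (N : EvenNIS K g0 g1 S) : Prop :=
  ∃ (x xs : g1) (A : Submodule K g1) (T : SuperAlg K g0 ↥A)
    (M : EvenNIS K g0 ↥A T) (D : OddDer K g0 ↥A T) (w : g0),
    DodDataEven K g0 ↥A T M D w ∧
    x ≠ 0 ∧ xs ∉ Submodule.span K ({x} : Set g1) ∧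
    Submodule.span K ({x, xs} : Set g1) ⊓ A = ⊥ ∧
    Submodule.span K ({x, xs} : Set g1) ⊔ A = ⊤ ∧
    Module.rank K ↥A + 2 = Module.rank K g1 ∧
    (∀ y : g0, S.br1 y x = 0) ∧ (∀ f : g1, S.br11 x f = 0) ∧ S.sq x = 0 ∧
    (∀ y z : g0, S.br0 y z = T.br0 y z) ∧
    (∀ (y : g0) (f : A), S.br1 y ↑f = ↑(T.br1 y f) + M.B1 (D.D0 y) f • x) ∧
    (∀ y : g0, S.br1 y xs = ↑(D.D0 y)) ∧
    (∀ f g : A, S.br11 ↑f ↑g = T.br11 f g) ∧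
    (∀ f : A, S.br11 xs ↑f = D.D1 f) ∧
    (∀ f : A, S.sq ↑f = T.sq f) ∧
    S.sq xs = w ∧
    (∀ y z : g0, N.B0 y z = M.B0 y z) ∧
    (∀ f g : A, N.B1 ↑f ↑g = M.B1 f g) ∧
    N.B1 x x = 0 ∧ N.B1 x xs = 1 ∧ N.B1 xs xs = 0 ∧
    (∀ f : A, N.B1 x ↑f = 0) ∧ (∀ f : A, N.B1 xs ↑f = 0)

variable [CharP K 2] {S : SuperAlg K g0 g1} (N : EvenNIS K g0 g1 S)

theorem isDevExtension_of_mem_zEven {x : g0} (hx0 : x ≠ 0) (hx : x ∈ zEven K g0 g1 S)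
    (hxx : N.B0 x x = 0) (hsq : ∀ f, N.B0 x (S.sq f) = 0) : IsDevExtension S N := by
  obtain ⟨xs, hxs⟩ := exists_apply_eq_one N.nondeg0 hx0
  have h : IsDualPair N.B0 x xs := ⟨N.symm0, hxx, hxs⟩
  obtain ⟨hbr0, hbr1⟩ := mem_zEven.1 hx
  exact ⟨x, xs, pairOrthogonal N.B0 x xs, evenReduction h hx hsq, evenReductionNIS h hx hsq,
    evenReductionDer h hx hsq, fun f => N.B0 xs (S.sq f), devDataEven_evenReduction h hx hsq,
    hx0, h.notMem_span, h.isCompl_span_pairOrthogonal.inf_eq_bot,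
    h.isCompl_span_pairOrthogonal.sup_eq_top, h.rank_pairOrthogonal_add_two, hbr0, hbr1,
    coe_br0_eq_smul_add_evenReduction h hx hsq, fun _ _ => rfl, fun _ => rfl, fun _ => rfl,
    br11_eq_smul_add_evenReduction h hx hsq, fun f => h.eq_smul_add_proj (hsq f),
    fun _ _ => rfl, fun _ _ => rfl, hxx, hxs, fun u => u.2.1, fun u => u.2.2⟩

theorem isDodExtension_of_mem_zOdd {x : g1} (hx0 : x ≠ 0) (hx : x ∈ zOdd K g0 g1 S)
    (hsq : S.sq x = 0) : IsDodExtension S N := by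
  obtain ⟨xs, hxs⟩ := exists_apply_eq_one N.nondeg1 hx0
  have h : IsDualPair N.B1 x xs := ⟨N.symm1, N.alt1 x, hxs⟩
  obtain ⟨hbr1, hbr11⟩ := mem_zOdd.1 hx
  exact ⟨x, xs, pairOrthogonal N.B1 x xs, oddReduction h hx, oddReductionNIS h hx,
    oddReductionDer h hx, S.sq xs, dodDataEven_oddReduction h hx, hx0, h.notMem_span,
    h.isCompl_span_pairOrthogonal.inf_eq_bot, h.isCompl_span_pairOrthogonal.sup_eq_top,
    h.rank_pairOrthogonal_add_two, hbr1, hbr11, hsq, fun _ _ => rfl,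
    coe_br1_eq_oddReduction_add_smul h hx, fun _ => rfl, fun _ _ => rfl, fun _ => rfl,
    fun _ => rfl, rfl, fun _ _ => rfl, fun _ _ => rfl, N.alt1 x, hxs, N.alt1 xs,
    fun f => f.2.1, fun f => f.2.2⟩

theorem stmt4_general (hz : ∃ x ∈ zOdd K g0 g1 S, x ≠ 0 ∧ x ∈ N.cone) :
    IsDevExtension S N ∨ IsDodExtension S N := by
  obtain ⟨x, hx, hx0, hcone⟩ := hz
  rcases eq_or_ne (S.sq x) 0 with hsq | hsq
  · exact .inr (isDodExtension_of_mem_zOdd N hx0 hx hsq)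
  · exact .inl (isDevExtension_of_mem_zEven N hsq (sq_mem_zEven hx) (hcone x) hcone)

/-- Theorem 3.7 of the paper: an irreducible
finite-dimensional NIS-Lie superalgebra `(g, B_g)` in characteristic 2 with
`B_g` even, such that `z(g)_1 ∩ C(g,B_g) ≠ {0}` where
`C(g,B_g) = {u ∈ g_1 : B(s(u), s(v)) = 0 ∀ v}`, is obtained either as a
`D_ev`-extension or as a `D_od`-extension of a NIS-Lie superalgebra of
dimension `dim g − 2`. -/
theorem stmt4 (K : Type) [Field K] [CharP K 2] (g0 g1 : Type)
    [AddCommGroup g0] [Module K g0] [AddCommGroup g1] [Module K g1]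
    [FiniteDimensional K g0] [FiniteDimensional K g1]
    (S : SuperAlg K g0 g1) (N : EvenNIS K g0 g1 S)
    (hirr : EvenIrreducible K g0 g1 S N)
    (hz : ∃ x : g1, x ≠ 0 ∧ (∀ y : g0, S.br1 y x = 0) ∧ (∀ f : g1, S.br11 x f = 0) ∧
            (∀ v : g1, N.B0 (S.sq x) (S.sq v) = 0)) :
    -- `g` is a `D_ev`-extension (with `x`, `x*` even) ...
    (∃ (x xs : g0) (A : Submodule K g0) (T : SuperAlg K ↥A g1)
      (M : EvenNIS K ↥A g1 T) (D : EvenDer K ↥A g1 T) (al : g1 → K),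
      DevDataEven K ↥A g1 T M D al ∧
      x ≠ 0 ∧ xs ∉ Submodule.span K ({x} : Set g0) ∧
      Submodule.span K ({x, xs} : Set g0) ⊓ A = ⊥ ∧
      Submodule.span K ({x, xs} : Set g0) ⊔ A = ⊤ ∧
      Module.finrank K ↥A + 2 = Module.finrank K g0 ∧
      (∀ y : g0, S.br0 x y = 0) ∧ (∀ f : g1, S.br1 x f = 0) ∧
      (∀ u v : A, S.br0 ↑u ↑v = M.B0 (D.D0 u) v • x + ↑(T.br0 u v)) ∧
      (∀ (u : A) (f : g1), S.br1 ↑u f = T.br1 u f) ∧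
      (∀ f : g1, S.br1 xs f = D.D1 f) ∧
      (∀ u : A, S.br0 xs ↑u = ↑(D.D0 u)) ∧
      (∀ f g : g1, S.br11 f g = M.B1 f (D.D1 g) • x + ↑(T.br11 f g)) ∧
      (∀ f : g1, S.sq f = al f • x + ↑(T.sq f)) ∧
      (∀ u v : A, N.B0 ↑u ↑v = M.B0 u v) ∧
      (∀ f g : g1, N.B1 f g = M.B1 f g) ∧
      N.B0 x x = 0 ∧ N.B0 x xs = 1 ∧
      (∀ u : A, N.B0 x ↑u = 0) ∧ (∀ u : A, N.B0 xs ↑u = 0))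
    ∨
    -- ... or a `D_od`-extension (with `x`, `x*` odd)
    (∃ (x xs : g1) (A : Submodule K g1) (T : SuperAlg K g0 ↥A)
      (M : EvenNIS K g0 ↥A T) (D : OddDer K g0 ↥A T) (w : g0),
      DodDataEven K g0 ↥A T M D w ∧
      x ≠ 0 ∧ xs ∉ Submodule.span K ({x} : Set g1) ∧
      Submodule.span K ({x, xs} : Set g1) ⊓ A = ⊥ ∧
      Submodule.span K ({x, xs} : Set g1) ⊔ A = ⊤ ∧
      Module.finrank K ↥A + 2 = Module.finrank K g1 ∧
      (∀ y : g0, S.br1 y x = 0) ∧ (∀ f : g1, S.br11 x f = 0) ∧ S.sq x = 0 ∧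
      (∀ y z : g0, S.br0 y z = T.br0 y z) ∧
      (∀ (y : g0) (f : A), S.br1 y ↑f = ↑(T.br1 y f) + M.B1 (D.D0 y) f • x) ∧
      (∀ y : g0, S.br1 y xs = ↑(D.D0 y)) ∧
      (∀ f g : A, S.br11 ↑f ↑g = T.br11 f g) ∧
      (∀ f : A, S.br11 xs ↑f = D.D1 f) ∧
      (∀ f : A, S.sq ↑f = T.sq f) ∧
      S.sq xs = w ∧
      (∀ y z : g0, N.B0 y z = M.B0 y z) ∧
      (∀ f g : A, N.B1 ↑f ↑g = M.B1 f g) ∧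
      N.B1 x x = 0 ∧ N.B1 x xs = 1 ∧ N.B1 xs xs = 0 ∧
      (∀ f : A, N.B1 x ↑f = 0) ∧ (∀ f : A, N.B1 xs ↑f = 0)) := by
  obtain ⟨x, hx0, hbr1, hbr11, hcone⟩ := hz
  simpa only [IsDevExtension, IsDodExtension, rank_add_two_eq_rank_iff_finrank] using
    stmt4_general N ⟨x, mem_zOdd.2 ⟨hbr1, hbr11⟩, hx0, hcone⟩

end Char2DoubleExt
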